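/- The Rees ideal 𝓘 of I = (x^d, y^d, x^b y^{d-b}) is generated by the set Σ := {G_{0,0}} ∪ {F_{k,i} : k odd, 1 ≤ k ≤ s+2, 1 ≤ i ≤ c_k} ∪ {G_{k,i} : k even, 2 ≤ k ≤ s+2, 1 ≤ i ≤ c_k}. In particular, 𝓘 is generated by 1 + c_1 + c_2 + ⋯ + c_{s+2} binomials. -/

import Mathlib

open MvPolynomial

/-!
Write `e = d - b`. For all `p, q` the binomial `x^A y^B v^(p+q) - x^B y^A t^p u^q`, where `A` and
`B` are the positive and negative parts of `e p - b q`, lies in the Rees ideal. Conversely the Rees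
ideal is spanned by differences of monomials with the same image, and modulo the binomials of a set
`S` of pairs two such monomials agree as soon as every admissible difference `(P, Q)` of their
`(t, u)`-exponents is dominated by a member `(p, q)` of `S`: `p + q ≤ P + Q`, and both parts of
`e p - b q` are at most those of `e P - b Q`.

With `N = p` and `D = p + q` one has `e p - b q = d N - b D`, so domination asks for fractions
`N / D` that approximate `b / d` best from either side. These are the semiconvergents of `b / d`,
and their binomials are the listed generators: consecutive convergents form a basis of `ℤ²`, in
which a point that approximates `b / d` better than a semiconvergent has coefficients forcing its
denominator to be at least that of the next one.
-/

theorem ker_le_of_forall_sub_mem {R M N ι κ : Type*} [Ring R] [AddCommGroup M] [Module R M]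
    [AddCommGroup N] [Module R N] {f : M →ₗ[R] N} {e : ι → M} {e' : κ → N} {φ : ι → κ}
    (he : ⊤ ≤ Submodule.span R (Set.range e)) (he' : LinearIndependent R e')
    (hf : ∀ i, f (e i) = e' (φ i)) {K : Submodule R M}
    (hK : ∀ i j, φ i = φ j → e i - e j ∈ K) : LinearMap.ker f ≤ K := by
  classical
  obtain ⟨ρ, hρ⟩ : ∃ ρ : κ → M, ∀ i, K.mkQ (ρ (φ i)) = K.mkQ (e i) := by
    refine ⟨fun c => if h : ∃ i, φ i = c then e h.choose else 0, fun i => ?_⟩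
    have h : ∃ j, φ j = φ i := ⟨i, rfl⟩
    simpa only [h, dif_pos, Submodule.mkQ_apply, Submodule.Quotient.eq] using
      hK _ _ h.choose_spec
  intro z hz
  obtain ⟨c, rfl⟩ : z ∈ LinearMap.range (Finsupp.linearCombination R e) := by
    rw [Finsupp.range_linearCombination]; exact he trivial
  have hc : c.mapDomain φ = 0 := by
    apply (linearIndependent_iff.mp he')
    rw [Finsupp.linearCombination_mapDomain, ← show f ∘ e = e' ∘ φ from funext hf,
      Finsupp.linearCombination_linear_comp]
    exact hz
  have key : K.mkQ ∘ e = (K.mkQ ∘ ρ) ∘ φ := funext fun i => (hρ i).symm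
  rw [← K.ker_mkQ, LinearMap.mem_ker]
  calc K.mkQ (Finsupp.linearCombination R e c)
      = Finsupp.linearCombination R (K.mkQ ∘ e) c := by
        rw [Finsupp.linearCombination_linear_comp, LinearMap.comp_apply]
    _ = Finsupp.linearCombination R (K.mkQ ∘ ρ) (c.mapDomain φ) := by
        rw [key, Finsupp.linearCombination_mapDomain]
    _ = 0 := by rw [hc, map_zero]

section Rees

variable {R σ τ : Type*}

/-- The map `R[x][t] → R[x][T]`, `tᵢ ↦ x^(a i) T`, whose kernel is the Rees ideal of the monomial
ideal `(x^(a i))ᵢ`. -/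
noncomputable def reesMap (R : Type*) [CommSemiring R] (a : τ → σ →₀ ℕ) :
    MvPolynomial τ (MvPolynomial σ R) →ₐ[MvPolynomial σ R] Polynomial (MvPolynomial σ R) :=
  aeval fun i => Polynomial.C (monomial (a i) 1) * Polynomial.X

theorem reesMap_monomial [CommSemiring R] (a : τ → σ →₀ ℕ) (m : σ →₀ ℕ) (w : τ →₀ ℕ) :
    reesMap R a (monomial w (monomial m 1)) =
      Polynomial.monomial w.degree (monomial (m + Finsupp.linearCombination ℕ a w) 1) := by
  have hC : (w.prod fun i n => (Polynomial.C (monomial (a i) (1 : R))) ^ n) =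
      Polynomial.C (monomial (Finsupp.linearCombination ℕ a w) 1) := by
    simp only [Finsupp.linearCombination_apply, monomial_finsupp_sum_index, map_one, one_mul,
      map_finsuppProd, ← map_pow, monomial_pow, one_pow]
  have hX : (w.prod fun _ n => (Polynomial.X : Polynomial (MvPolynomial σ R)) ^ n) =
      Polynomial.X ^ w.degree := by
    rw [Finsupp.prod, Finset.prod_pow_eq_pow_sum, Finsupp.degree_apply]
  simp only [reesMap, aeval_monomial, mul_pow, Finsupp.prod_mul, hC, hX]
  rw [Polynomial.algebraMap_eq, ← mul_assoc, ← map_mul, monomial_mul, one_mul,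
    Polynomial.C_mul_X_pow_eq_monomial]

theorem ker_reesMap_le [CommRing R] (a : τ → σ →₀ ℕ)
    {J : Ideal (MvPolynomial τ (MvPolynomial σ R))}
    (hJ : ∀ m w m' w', w.degree = w'.degree →
      m + Finsupp.linearCombination ℕ a w = m' + Finsupp.linearCombination ℕ a w' →
      monomial w (monomial m 1) - monomial w' (monomial m' 1) ∈ J) :
    RingHom.ker (reesMap R a) ≤ J := by
  let e := (basisMonomials σ R).smulTower (basisMonomials τ (MvPolynomial σ R))
  let e' := (basisMonomials σ R).smulTower (Polynomial.basisMonomials (MvPolynomial σ R))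
  have he : ∀ i, e i = monomial i.2 (monomial i.1 1) := fun i => by
    simp [e, Module.Basis.smulTower_apply, smul_monomial]
  have he' : ∀ i, e' i = Polynomial.monomial i.2 (monomial i.1 1) := fun i => by
    simp [e', Module.Basis.smulTower_apply, Polynomial.smul_monomial]
  refine ker_le_of_forall_sub_mem (R := R) (K := J.restrictScalars R)
    (f := (reesMap R a).toLinearMap.restrictScalars R)
    (φ := fun i => (i.1 + Finsupp.linearCombination ℕ a i.2, i.2.degree))
    e.span_eq.ge e'.linearIndependent (fun i => ?_) (fun i j hij => ?_)
  · rw [he, he']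
    exact reesMap_monomial a i.1 i.2
  · rw [he, he]
    obtain ⟨hm, hw⟩ := Prod.mk.inj hij
    exact hJ _ _ _ _ hw hm

end Rees

theorem monomial_monomial_eq_mul_pow {R : Type*} [CommSemiring R] (m : Fin 2 →₀ ℕ)
    (w : Fin 3 →₀ ℕ) :
    (monomial w (monomial m 1) : MvPolynomial (Fin 3) (MvPolynomial (Fin 2) R)) =
      C (X 0) ^ m 0 * C (X 1) ^ m 1 * X 0 ^ w 0 * X 1 ^ w 1 * X 2 ^ w 2 := by
  rw [monomial_eq, monomial_eq (s := m)]
  simp [Finsupp.prod_fintype, Fin.prod_univ_succ, mul_assoc]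

/-- The binomial `x^A y^B v^(p+q) - x^B y^A t^p u^q` with `A - B = e p - b q`, in the variables
`t, u, v = X 0, X 1, X 2`. The truncated differences are the positive and negative parts of
`e p - b q`. -/
noncomputable def toricBinomial (R : Type*) [CommRing R] (b e p q : ℕ) :
    MvPolynomial (Fin 3) (MvPolynomial (Fin 2) R) :=
  C (X 0 ^ (e * p - b * q) * X 1 ^ (b * q - e * p)) * X 2 ^ (p + q) -
    C (X 0 ^ (b * q - e * p) * X 1 ^ (e * p - b * q)) * X 0 ^ p * X 1 ^ q

/-- `S` contains, for every integer point `(P, Q)` with `P + Q > 0`, a nonzero point `(p, q)` with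
`p + q ≤ P + Q` such that the positive and negative parts of `e p - b q` are at most those of
`e P - b Q`. -/
def IsDominating (b e : ℕ) (S : Set (ℕ × ℕ)) : Prop :=
  ∀ P Q : ℤ, 0 < P + Q → ∃ w ∈ S, 0 < w.1 + w.2 ∧ (w.1 + w.2 : ℤ) ≤ P + Q ∧
    e * w.1 - b * w.2 ≤ (e * P - b * Q).toNat ∧ b * w.2 - e * w.1 ≤ (b * Q - e * P).toNat

section CommMonoid

variable {M : Type*} [CommMonoid M] {x y t u v : M}

theorem monomial_eq_of_pow_mul_eq {d a₁ b₁ p₁ q₁ a₂ b₂ p₂ q₂ : ℕ} (hxy : x ^ d * u = y ^ d * t)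
    (ha : a₁ + d * p₁ = a₂ + d * p₂) (hb : b₁ + d * q₁ = b₂ + d * q₂) (hpq : p₁ + q₁ = p₂ + q₂) :
    x ^ a₁ * y ^ b₁ * t ^ p₁ * u ^ q₁ = x ^ a₂ * y ^ b₂ * t ^ p₂ * u ^ q₂ := by
  wlog h : p₁ ≤ p₂ generalizing a₁ b₁ p₁ q₁ a₂ b₂ p₂ q₂
  · exact (this ha.symm hb.symm hpq.symm (by omega)).symm
  obtain ⟨n, rfl⟩ := Nat.exists_eq_add_of_le h
  obtain rfl : q₁ = q₂ + n := by omega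
  obtain rfl : a₁ = a₂ + d * n := by linarith
  obtain rfl : b₂ = b₁ + d * n := by linarith
  have hn : x ^ (d * n) * u ^ n = y ^ (d * n) * t ^ n := by
    simpa only [mul_pow, ← pow_mul] using congrArg (· ^ n) hxy
  calc x ^ (a₂ + d * n) * y ^ b₁ * t ^ p₁ * u ^ (q₂ + n)
      = x ^ a₂ * y ^ b₁ * t ^ p₁ * u ^ q₂ * (x ^ (d * n) * u ^ n) := by
        simp only [pow_add]; ac_rfl
    _ = x ^ a₂ * y ^ (b₁ + d * n) * t ^ (p₁ + n) * u ^ q₂ := by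
        rw [hn]; simp only [pow_add]; ac_rfl

/-- The relation that `toricBinomial` imposes on elements of a quotient, for elements
`x, y, t, u, v` of an arbitrary commutative monoid. -/
def IsToricRelation (x y t u v : M) (b e p q : ℕ) : Prop :=
  x ^ (e * p - b * q) * y ^ (b * q - e * p) * v ^ (p + q) =
    x ^ (b * q - e * p) * y ^ (e * p - b * q) * t ^ p * u ^ q

theorem IsToricRelation.mul_eq_mul {b e p q : ℕ} (h : IsToricRelation x y t u v b e p q)
    (α β p' q' γ : ℕ) :
    x ^ (α + (e * p - b * q)) * y ^ (β + (b * q - e * p)) * t ^ p' * u ^ q' * v ^ (γ + (p + q)) =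
      x ^ (α + (b * q - e * p)) * y ^ (β + (e * p - b * q)) * t ^ (p' + p) * u ^ (q' + q) *
        v ^ γ := by
  rw [IsToricRelation] at h
  generalize e * p - b * q = A at *
  generalize b * q - e * p = B at *
  calc
    _ = x ^ α * y ^ β * t ^ p' * u ^ q' * v ^ γ * (x ^ A * y ^ B * v ^ (p + q)) := by
        rw [pow_add x, pow_add y, pow_add v γ]; ac_rfl
    _ = x ^ (α + B) * y ^ (β + A) * t ^ (p' + p) * u ^ (q' + q) * v ^ γ := by
        rw [h]; simp only [pow_add]; ac_rfl

theorem IsToricRelation.pow_mul_eq {b e : ℕ} (ht : IsToricRelation x y t u v b e 1 0)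
    (hu : IsToricRelation x y t u v b e 0 1) : x ^ (b + e) * u = y ^ (b + e) * t := by
  have ht : x ^ e * v = y ^ e * t := by simpa [IsToricRelation] using ht
  have hu : y ^ b * v = x ^ b * u := by simpa [IsToricRelation] using hu
  calc x ^ (b + e) * u = x ^ e * (x ^ b * u) := by rw [pow_add]; ac_rfl
    _ = y ^ b * (x ^ e * v) := by rw [← hu]; ac_rfl
    _ = y ^ (b + e) * t := by rw [ht, pow_add]; ac_rfl

-- Induction on the exponent of `v`: a member of `S` dominating the difference of the exponents of
-- `t` and `u` is a relation whose left-hand side divides the monomial with more `v`.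
theorem monomial_eq_of_isDominating {b e : ℕ} {S : Set (ℕ × ℕ)} (hS : IsDominating b e S)
    (ht : (1, 0) ∈ S) (hu : (0, 1) ∈ S)
    (hrel : ∀ w ∈ S, IsToricRelation x y t u v b e w.1 w.2)
    {a₁ b₁ p₁ q₁ g₁ a₂ b₂ p₂ q₂ g₂ : ℕ}
    (ha : a₁ + (b + e) * p₁ + b * g₁ = a₂ + (b + e) * p₂ + b * g₂)
    (hb : b₁ + (b + e) * q₁ + e * g₁ = b₂ + (b + e) * q₂ + e * g₂)
    (hn : p₁ + q₁ + g₁ = p₂ + q₂ + g₂) (hg : g₂ ≤ g₁) :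
    x ^ a₁ * y ^ b₁ * t ^ p₁ * u ^ q₁ * v ^ g₁ = x ^ a₂ * y ^ b₂ * t ^ p₂ * u ^ q₂ * v ^ g₂ := by
  induction g₁ using Nat.strong_induction_on generalizing a₁ b₁ p₁ q₁ with
  | _ g₁ ih =>
  obtain rfl | hlt := hg.eq_or_lt
  · congr 1
    exact monomial_eq_of_pow_mul_eq ((hrel _ ht).pow_mul_eq (hrel _ hu)) (by omega) (by omega)
      (by omega)
  obtain ⟨⟨p, q⟩, hw, hpos, hle, hx, hy⟩ := hS (p₂ - p₁) (q₂ - q₁) (by omega)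
  have hx' : e * p - b * q ≤ a₁ := hx.trans <| by
    have : (e * (p₂ - p₁) - b * (q₂ - q₁) : ℤ) = a₁ - a₂ := by
      zify at ha hn
      linear_combination b * hn - ha
    omega
  have hy' : b * q - e * p ≤ b₁ := hy.trans <| by
    have : (b * (q₂ - q₁) - e * (p₂ - p₁) : ℤ) = b₁ - b₂ := by
      zify at hb hn
      linear_combination e * hn - hb
    omega
  obtain ⟨α, rfl⟩ := Nat.exists_eq_add_of_le' hx'
  obtain ⟨β, rfl⟩ := Nat.exists_eq_add_of_le' hy'
  obtain ⟨γ, rfl⟩ : ∃ γ, g₁ = γ + (p + q) := Nat.exists_eq_add_of_le' (by omega)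
  have hsub : e * p - b * q + b * q = b * q - e * p + e * p := by omega
  rw [(hrel _ hw).mul_eq_mul α β p₁ q₁ γ]
  exact ih γ (by omega) (by linarith) (by linarith) (by omega) (by omega)

end CommMonoid

/-- The Rees map of the ideal `(x^(b+e), y^(b+e), x^b y^e)`. -/
noncomputable abbrev trinomialReesMap (R : Type*) [CommRing R] (b e : ℕ) :
    MvPolynomial (Fin 3) (MvPolynomial (Fin 2) R) →ₐ[MvPolynomial (Fin 2) R]
      Polynomial (MvPolynomial (Fin 2) R) :=
  reesMap R ![Finsupp.single 0 (b + e), Finsupp.single 1 (b + e),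
    Finsupp.single 0 b + Finsupp.single 1 e]

section TrinomialReesMap

variable {R : Type*} [CommRing R]

theorem trinomialReesMap_eq_aeval (b e : ℕ) :
    trinomialReesMap R b e = aeval ![Polynomial.C (X 0 ^ (b + e)) * Polynomial.X,
      Polynomial.C (X 1 ^ (b + e)) * Polynomial.X,
      Polynomial.C (X 0 ^ b * X 1 ^ e) * Polynomial.X] := by
  refine congrArg aeval (funext fun i => ?_)
  fin_cases i <;> simp [X_pow_eq_monomial, monomial_mul]

theorem toricBinomial_mem_ker (b e p q : ℕ) :
    toricBinomial R b e p q ∈ RingHom.ker (trinomialReesMap R b e) := by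
  have hsub : e * p - b * q + b * q = b * q - e * p + e * p := by omega
  rw [RingHom.mem_ker, trinomialReesMap_eq_aeval, toricBinomial]
  generalize e * p - b * q = A at *
  generalize b * q - e * p = B at *
  have hx : A + b * (p + q) = B + (b + e) * p := by linarith
  have hy : B + e * (p + q) = A + (b + e) * q := by linarith
  simp only [map_sub, map_mul, map_pow, algHom_C, aeval_X, Polynomial.algebraMap_eq,
    Matrix.cons_val, mul_pow, ← pow_mul]
  rw [sub_eq_zero]
  generalize (Polynomial.C (X 0) : Polynomial (MvPolynomial (Fin 2) R)) = x
  generalize (Polynomial.C (X 1) : Polynomial (MvPolynomial (Fin 2) R)) = y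
  calc
    _ = x ^ (A + b * (p + q)) * y ^ (B + e * (p + q)) * Polynomial.X ^ (p + q) := by ring
    _ = x ^ (B + (b + e) * p) * y ^ (A + (b + e) * q) * Polynomial.X ^ (p + q) := by rw [hx, hy]
    _ = _ := by ring

theorem isToricRelation_mk {J : Ideal (MvPolynomial (Fin 3) (MvPolynomial (Fin 2) R))}
    {b e p q : ℕ} (h : toricBinomial R b e p q ∈ J) :
    IsToricRelation (Ideal.Quotient.mk J (C (X 0))) (Ideal.Quotient.mk J (C (X 1)))
      (Ideal.Quotient.mk J (X 0)) (Ideal.Quotient.mk J (X 1)) (Ideal.Quotient.mk J (X 2))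
      b e p q := by
  simpa only [IsToricRelation, map_mul, map_pow] using Ideal.Quotient.eq.mpr h

theorem ker_trinomialReesMap {b e : ℕ} {S : Set (ℕ × ℕ)} (hS : IsDominating b e S)
    (ht : (1, 0) ∈ S) (hu : (0, 1) ∈ S) :
    RingHom.ker (trinomialReesMap R b e) =
      Ideal.span ((fun w => toricBinomial R b e w.1 w.2) '' S) := by
  refine le_antisymm (ker_reesMap_le _ fun m w m' w' hdeg hm => ?_) (Ideal.span_le.mpr ?_)
  · set J := Ideal.span ((fun w => toricBinomial R b e w.1 w.2) '' S)
    have hmem : ∀ w ∈ S, toricBinomial R b e w.1 w.2 ∈ J := fun w hw =>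
      Ideal.subset_span (Set.mem_image_of_mem _ hw)
    have hrel := fun w hw => isToricRelation_mk (hmem w hw)
    have hx : m 0 + (b + e) * w 0 + b * w 2 = m' 0 + (b + e) * w' 0 + b * w' 2 := by
      simpa [Finsupp.linearCombination_apply, Finsupp.sum_fintype, Fin.sum_univ_three, mul_comm,
        add_mul, add_assoc] using DFunLike.congr_fun hm 0
    have hy : m 1 + (b + e) * w 1 + e * w 2 = m' 1 + (b + e) * w' 1 + e * w' 2 := by
      simpa [Finsupp.linearCombination_apply, Finsupp.sum_fintype, Fin.sum_univ_three, mul_comm,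
        add_mul, add_assoc] using DFunLike.congr_fun hm 1
    have hdeg : w 0 + w 1 + w 2 = w' 0 + w' 1 + w' 2 := by
      simpa only [Finsupp.degree_eq_sum, Fin.sum_univ_three] using hdeg
    rw [← Ideal.Quotient.eq, monomial_monomial_eq_mul_pow, monomial_monomial_eq_mul_pow]
    simp only [map_mul, map_pow]
    obtain hle | hle := le_total (w' 2) (w 2)
    · exact monomial_eq_of_isDominating hS ht hu hrel hx hy hdeg hle
    · exact (monomial_eq_of_isDominating hS ht hu hrel hx.symm hy.symm hdeg.symm hle).symm
  · rintro _ ⟨w, -, rfl⟩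
    exact toricBinomial_mem_ker b e w.1 w.2

theorem toricBinomial_of_mul_eq_add {b e p q A : ℕ} (h : e * p = A + b * q) :
    toricBinomial R b e p q = C (X 0 ^ A) * X 2 ^ (p + q) - C (X 1 ^ A) * X 0 ^ p * X 1 ^ q := by
  simp [toricBinomial, h]

theorem toricBinomial_of_mul_eq_add' {b e p q A : ℕ} (h : b * q = A + e * p) :
    toricBinomial R b e p q = C (X 1 ^ A) * X 2 ^ (p + q) - C (X 0 ^ A) * X 0 ^ p * X 1 ^ q := by
  simp [toricBinomial, h]

end TrinomialReesMap

/-- The numerators `1, 0, 1, …` of the convergents of `b / d`, when `c 1, c 2, …` are the quotients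
of the Euclidean algorithm for `d > b`. The denominators are the paper's `e_k`. -/
def convNum (c : ℕ → ℕ) : ℕ → ℕ
  | 0 => 1
  | 1 => 0
  | j + 2 => c (j + 1) * convNum c (j + 1) + convNum c j

/-- The semiconvergent `N / D` of `b / d` obtained by adding the numerator and denominator of
convergent `j + 1` to those of convergent `j`, `i` times. It is encoded as the pair `(N, D - N)`,
with `D - N` truncated; `ee` is the sequence of denominators of the convergents. -/
def semiconvergent (c ee : ℕ → ℕ) (j i : ℕ) : ℕ × ℕ :=
  (i * convNum c (j + 1) + convNum c j,
    i * ee (j + 1) + ee j - (i * convNum c (j + 1) + convNum c j))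

/-- The semiconvergents up to block `n`, together with the convergent `0 / 1`. -/
def semiconvergents (c ee : ℕ → ℕ) (n : ℕ) : Set (ℕ × ℕ) :=
  insert (0, 1) {w | ∃ j i, j ≤ n ∧ 1 ≤ i ∧ i ≤ c (j + 1) ∧ w = semiconvergent c ee j i}

/-- The Euclidean algorithm for `d > b`, with remainders `dd`, quotients `cc` and denominators `ee`
of the convergents of `b / d`. Relative to the paper, `dd` and `ee` are shifted by one: `dd j` is
`d_{j-1}` and `ee j` is `e_{j-1}`. -/
structure IsEuclideanAlgorithm (d b s : ℕ) (dd cc ee : ℕ → ℕ) : Prop where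
  dd_zero : dd 0 = d
  dd_one : dd 1 = b
  dd_rec : ∀ j ≤ s + 1, dd j = cc (j + 1) * dd (j + 1) + dd (j + 2)
  dd_lt : ∀ j ≤ s + 2, dd (j + 1) < dd j
  dd_last : dd (s + 3) = 0
  ee_zero : ee 0 = 0
  ee_one : ee 1 = 1
  ee_rec : ∀ j ≤ s + 1, ee (j + 2) = cc (j + 1) * ee (j + 1) + ee j

theorem add_le_of_mem_cone {A A' n g δ ε m l : ℤ} (hA : A = m * A' - l * δ)
    (hn : n = m * g + l * ε) (hA₀ : 0 ≤ A) (hAA' : A < A') (hn₀ : 0 < n) (hg : 0 ≤ g)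
    (hδ : 0 < δ) (hε : 0 ≤ ε) : g + ε ≤ n := by
  have hm : 0 < m := by
    by_contra! hm
    have hl : l ≤ 0 := by
      by_contra! hl
      nlinarith
    nlinarith
  have hl : 0 < l := by
    by_contra! hl
    nlinarith
  nlinarith

namespace IsEuclideanAlgorithm

variable {d b s : ℕ} {dd cc ee : ℕ → ℕ} (h : IsEuclideanAlgorithm d b s dd cc ee)
include h

theorem le : b ≤ d := by
  have := h.dd_lt 0 (by omega)
  rw [h.dd_zero, h.dd_one] at this
  exact this.le

theorem pos : 0 < d := h.dd_zero ▸ (Nat.zero_le _).trans_lt (h.dd_lt 0 (by omega))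

theorem cc_pos {j : ℕ} (hj : j ≤ s + 1) : 0 < cc (j + 1) := by
  have hrec := h.dd_rec j hj
  have hlt := h.dd_lt j (by omega)
  have hlt' : dd (j + 2) < dd (j + 1) := h.dd_lt (j + 1) (by omega)
  refine Nat.pos_of_ne_zero fun hc => ?_
  rw [hc] at hrec
  omega

theorem mul_convNum_sub_mul_ee {j : ℕ} (hj : j ≤ s + 3) :
    (d * convNum cc j - b * ee j : ℤ) = (-1) ^ j * dd j := by
  induction j using Nat.twoStepInduction with
  | zero => simp [convNum, h.dd_zero, h.ee_zero]
  | one => simp [convNum, h.dd_one, h.ee_one]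
  | more j ih₀ ih₁ =>
    have hdd : (dd j : ℤ) = cc (j + 1) * dd (j + 1) + dd (j + 2) := by
      exact_mod_cast h.dd_rec j (by omega)
    rw [h.ee_rec j (by omega), convNum]
    push_cast
    linear_combination cc (j + 1) * ih₁ (by omega) + ih₀ (by omega) + (-1) ^ j * hdd

theorem convNum_mul_ee_sub {j : ℕ} (hj : j ≤ s + 2) :
    (convNum cc j * ee (j + 1) - convNum cc (j + 1) * ee j : ℤ) = (-1) ^ j := by
  induction j with
  | zero => simp [convNum, h.ee_one]
  | succ j ih =>
    rw [h.ee_rec j (by omega), convNum]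
    push_cast
    linear_combination -ih (by omega)

theorem ee_succ_pos {j : ℕ} (hj : j ≤ s + 2) : 0 < ee (j + 1) := by
  induction j with
  | zero => simp [h.ee_one]
  | succ j ih =>
    rw [h.ee_rec j (by omega)]
    exact Nat.add_pos_left (Nat.mul_pos (h.cc_pos (by omega)) (ih (by omega))) _

theorem convNum_succ_le_ee {j : ℕ} (hj : j ≤ s + 2) : convNum cc (j + 1) ≤ ee (j + 1) := by
  induction j using Nat.twoStepInduction with
  | zero => simp [convNum]
  | one =>
    have := h.cc_pos (Nat.zero_le _)
    simpa [convNum, h.ee_rec 0, h.ee_one, h.ee_zero, Nat.one_le_iff_ne_zero] using this.ne'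
  | more j ih₀ ih₁ =>
    rw [h.ee_rec (j + 1) (by omega), convNum]
    gcongr
    exacts [ih₁ (by omega), ih₀ (by omega)]

theorem exists_coords {j : ℕ} (hj : j ≤ s + 2) (N D : ℤ) : ∃ m l : ℤ,
    N = m * convNum cc j + l * convNum cc (j + 1) ∧ D = m * ee j + l * ee (j + 1) ∧
    (-1) ^ j * (d * N - b * D) = m * dd j - l * dd (j + 1) := by
  have hdet := h.convNum_mul_ee_sub hj
  have h₀ := h.mul_convNum_sub_mul_ee (j := j) (by omega)
  have h₁ := h.mul_convNum_sub_mul_ee (j := j + 1) (by omega)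
  have hsq : ((-1) ^ j * (-1) ^ j : ℤ) = 1 := by rw [← mul_pow]; simp
  obtain ⟨m, l, rfl, rfl⟩ : ∃ m l : ℤ, N = m * convNum cc j + l * convNum cc (j + 1) ∧
      D = m * ee j + l * ee (j + 1) := by
    refine ⟨(-1) ^ j * (N * ee (j + 1) - D * convNum cc (j + 1)),
      (-1) ^ j * (D * convNum cc j - N * ee j), ?_, ?_⟩
    · linear_combination -N * hsq - (-1) ^ j * N * hdet
    · linear_combination -D * hsq - (-1) ^ j * D * hdet
  refine ⟨m, l, rfl, rfl, ?_⟩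
  linear_combination (-1) ^ j * m * h₀ + (-1) ^ j * l * h₁ + (m * dd j - l * dd (j + 1)) * hsq

theorem semiconvergent_fst_add_snd {j i : ℕ} (hj : j ≤ s + 2) (hi : 1 ≤ i) :
    (semiconvergent cc ee j i).1 + (semiconvergent cc ee j i).2 = i * ee (j + 1) + ee j := by
  refine Nat.add_sub_of_le ?_
  cases j with
  | zero => simpa [semiconvergent, convNum, h.ee_one, h.ee_zero] using hi
  | succ j =>
    dsimp only [semiconvergent]
    gcongr
    exacts [h.convNum_succ_le_ee (by omega), h.convNum_succ_le_ee (by omega)]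

theorem mul_semiconvergent_sub {j i : ℕ} (hj : j ≤ s + 1) (hi₁ : 1 ≤ i) (hi : i ≤ cc (j + 1)) :
    ((d - b : ℕ) * (semiconvergent cc ee j i).1 - b * (semiconvergent cc ee j i).2 : ℤ) =
      (-1) ^ j * (dd j - i * dd (j + 1) : ℕ) := by
  have hle : i * dd (j + 1) ≤ dd j := by
    rw [h.dd_rec j hj]
    exact (Nat.mul_le_mul_right _ hi).trans (Nat.le_add_right _ _)
  have hadd := h.semiconvergent_fst_add_snd (j := j) (by omega) hi₁
  have hfst : (semiconvergent cc ee j i).1 = i * convNum cc (j + 1) + convNum cc j := rfl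
  zify [hle, h.le] at hadd hfst ⊢
  linear_combination -b * hadd + d * hfst + h.mul_convNum_sub_mul_ee (j := j) (by omega) +
    i * h.mul_convNum_sub_mul_ee (j := j + 1) (by omega)

theorem mul_semiconvergent_fst {j i : ℕ} (hj : j ≤ s + 1) (hi₁ : 1 ≤ i) (hi : i ≤ cc (j + 1))
    (hj₂ : Even j) : (d - b) * (semiconvergent cc ee j i).1 =
      dd j - i * dd (j + 1) + b * (semiconvergent cc ee j i).2 := by
  have := h.mul_semiconvergent_sub hj hi₁ hi
  rw [hj₂.neg_one_pow] at this
  omega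

theorem mul_semiconvergent_snd {j i : ℕ} (hj : j ≤ s + 1) (hi₁ : 1 ≤ i) (hi : i ≤ cc (j + 1))
    (hj₂ : Odd j) : b * (semiconvergent cc ee j i).2 =
      dd j - i * dd (j + 1) + (d - b) * (semiconvergent cc ee j i).1 := by
  have := h.mul_semiconvergent_sub hj hi₁ hi
  rw [hj₂.neg_one_pow] at this
  omega

theorem exists_semiconvergent_le {j A : ℕ} {N D : ℤ} (hj : j ≤ s + 1) (hD : 0 < D)
    (hA : (-1) ^ j * (d * N - b * D) = A) (hAj : A < dd j) (hjA : dd (j + 2) ≤ A) :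
    ∃ i, 1 ≤ i ∧ i ≤ cc (j + 1) ∧ dd j - i * dd (j + 1) ≤ A ∧ (i * ee (j + 1) + ee j : ℕ) ≤ D := by
  have hrec := h.dd_rec j hj
  have hpos : 0 < dd (j + 1) := (Nat.zero_le _).trans_lt (h.dd_lt (j + 1) (by omega))
  obtain ⟨q, hq, hq'⟩ : ∃ q, q * dd (j + 1) + A < dd j ∧ dd j ≤ (q + 1) * dd (j + 1) + A := by
    refine ⟨(dd j - A - 1) / dd (j + 1), ?_, ?_⟩
    · have := Nat.div_mul_le_self (dd j - A - 1) (dd (j + 1))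
      omega
    · have := Nat.lt_mul_of_div_lt (Nat.lt_add_one ((dd j - A - 1) / dd (j + 1))) hpos
      omega
  have hqc : q < cc (j + 1) := by
    by_contra! hc
    have := Nat.mul_le_mul_right (dd (j + 1)) hc
    omega
  obtain ⟨m, l, -, rfl, hml⟩ := h.exists_coords (j := j) (by omega) N D
  have hA' : (A : ℤ) = m * (dd j - q * dd (j + 1)) - (l - m * q) * dd (j + 1) := by
    linear_combination hml - hA
  have hn : m * ee j + l * ee (j + 1) =
      m * (q * ee (j + 1) + ee j) + (l - m * q) * ee (j + 1) := by ring
  have hle := add_le_of_mem_cone hA' hn (by positivity) (by zify at hq; linarith) hD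
    (by positivity) (by exact_mod_cast hpos) (by positivity)
  refine ⟨q + 1, by omega, hqc, by omega, ?_⟩
  push_cast
  linarith

theorem exists_dd_le (N D : ℤ) : ∃ l ≤ s + 3, (dd l : ℤ) ≤ (-1) ^ l * (d * N - b * D) := by
  obtain ⟨m, l, -, -, hm⟩ := h.exists_coords le_rfl N D
  rw [h.dd_last, Nat.cast_zero, mul_zero, sub_zero] at hm
  obtain hm₀ | hm₀ := lt_or_ge 0 m
  · refine ⟨s + 2, by omega, ?_⟩
    rw [hm]
    exact le_mul_of_one_le_left (by positivity) hm₀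
  · refine ⟨s + 3, le_rfl, ?_⟩
    rw [pow_succ, h.dd_last, mul_neg_one, neg_mul, hm, Nat.cast_zero, neg_nonneg]
    exact mul_nonpos_of_nonpos_of_nonneg hm₀ (by positivity)

theorem exists_semiconvergent_of_dd_le {l : ℕ} {N D : ℤ} (hl : l ≤ s + 3) (hD : 0 < D)
    (hlA : (dd l : ℤ) ≤ (-1) ^ l * (d * N - b * D)) :
    ((b : ℤ) ≤ b * D - d * N) ∨ ∃ j i, j ≤ s + 1 ∧ 1 ≤ i ∧ i ≤ cc (j + 1) ∧
      (i * ee (j + 1) + ee j : ℕ) ≤ D ∧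
      ((dd j - i * dd (j + 1) : ℕ) : ℤ) ≤ (-1) ^ j * (d * N - b * D) := by
  induction l using Nat.twoStepInduction with
  | zero =>
    refine .inr ⟨0, 1, by omega, le_rfl, h.cc_pos (by omega), ?_, ?_⟩
    · simpa [h.ee_zero, h.ee_one] using Int.add_one_le_of_lt hD
    · exact le_trans (by simp) hlA
  | one => exact .inl (by simpa [h.dd_one] using hlA)
  | more j ih₀ _ =>
    obtain hlt | hle := lt_or_ge ((-1) ^ j * (d * N - b * D)) (dd j : ℤ)
    · rw [pow_add, neg_one_sq, mul_one] at hlA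
      obtain ⟨A, hA⟩ := Int.eq_ofNat_of_zero_le ((Int.natCast_nonneg _).trans hlA)
      rw [hA] at hlt hlA
      obtain ⟨i, hi₁, hi, hiA, hiD⟩ := h.exists_semiconvergent_le (by omega) hD hA
        (by exact_mod_cast hlt) (by exact_mod_cast hlA)
      exact .inr ⟨j, i, by omega, hi₁, hi, hiD, by rw [hA]; exact_mod_cast hiA⟩
    · exact ih₀ (by omega) hle

theorem isDominating_semiconvergents : IsDominating b (d - b) (semiconvergents cc ee (s + 1)) := by
  intro P Q hPQ
  have hed : ((d - b : ℕ) : ℤ) = d - b := Nat.cast_sub h.le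
  have hval : d * P - b * (P + Q) = (d - b : ℕ) * P - b * Q := by rw [hed]; ring
  obtain ⟨l, hl, hlA⟩ := h.exists_dd_le P (P + Q)
  obtain hb | ⟨j, i, hj, hi₁, hi, hD, hA⟩ := h.exists_semiconvergent_of_dd_le hl hPQ hlA
  · exact ⟨(0, 1), Set.mem_insert _ _, by omega, by omega, by omega,
      by rw [mul_zero, mul_one]; omega⟩
  have hadd := h.semiconvergent_fst_add_snd (j := j) (by omega) hi₁
  have hpos : 0 < i * ee (j + 1) := Nat.mul_pos hi₁ (h.ee_succ_pos (by omega))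
  refine ⟨semiconvergent cc ee j i, .inr ⟨j, i, hj, hi₁, hi, rfl⟩, by omega, by omega, ?_⟩
  rw [hval] at hA
  obtain hj₂ | hj₂ := j.even_or_odd
  · have := h.mul_semiconvergent_fst hj hi₁ hi hj₂
    rw [hj₂.neg_one_pow, one_mul] at hA
    omega
  · have := h.mul_semiconvergent_snd hj hi₁ hi hj₂
    rw [hj₂.neg_one_pow] at hA
    omega

theorem toricBinomial_semiconvergent_of_even (R : Type*) [CommRing R] {j i : ℕ} (hj : j ≤ s + 1)
    (hi₁ : 1 ≤ i) (hi : i ≤ cc (j + 1)) (hj₂ : Even j) :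
    let A := dd j - i * dd (j + 1)
    let D := i * ee (j + 1) + ee j
    let p := (A + b * D) / d
    toricBinomial R b (d - b) (semiconvergent cc ee j i).1 (semiconvergent cc ee j i).2 =
      C (X 0 ^ A) * X 2 ^ D - C (X 1 ^ A) * X 0 ^ p * X 1 ^ (D - p) := by
  intro A D p
  have hD : (semiconvergent cc ee j i).1 + (semiconvergent cc ee j i).2 = D :=
    h.semiconvergent_fst_add_snd (by omega) hi₁
  have hA := h.mul_semiconvergent_fst hj hi₁ hi hj₂
  have hp : p = (semiconvergent cc ee j i).1 := by
    refine Nat.div_eq_of_eq_mul_right h.pos ?_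
    zify [h.le] at hA hD ⊢
    linear_combination -b * hD - hA
  rw [toricBinomial_of_mul_eq_add hA, hp, hD, ← Nat.eq_sub_of_add_eq' hD]

theorem toricBinomial_semiconvergent_of_odd (R : Type*) [CommRing R] {j i : ℕ} (hj : j ≤ s + 1)
    (hi₁ : 1 ≤ i) (hi : i ≤ cc (j + 1)) (hj₂ : Odd j) :
    let A := dd j - i * dd (j + 1)
    let D := i * ee (j + 1) + ee j
    let q := (A + (d - b) * D) / d
    toricBinomial R b (d - b) (semiconvergent cc ee j i).1 (semiconvergent cc ee j i).2 =
      C (X 1 ^ A) * X 2 ^ D - C (X 0 ^ A) * X 0 ^ (D - q) * X 1 ^ q := by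
  intro A D q
  have hD : (semiconvergent cc ee j i).1 + (semiconvergent cc ee j i).2 = D :=
    h.semiconvergent_fst_add_snd (by omega) hi₁
  have hA := h.mul_semiconvergent_snd hj hi₁ hi hj₂
  have hq : q = (semiconvergent cc ee j i).2 := by
    refine Nat.div_eq_of_eq_mul_right h.pos ?_
    zify [h.le] at hA hD ⊢
    linear_combination (b - d) * hD - hA
  rw [toricBinomial_of_mul_eq_add' hA, hq, hD, ← Nat.eq_sub_of_add_eq hD]

theorem one_zero_mem_semiconvergents (n : ℕ) : (1, 0) ∈ semiconvergents cc ee n :=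
  .inr ⟨0, 1, n.zero_le, le_rfl, h.cc_pos (Nat.zero_le _), by
    simp [semiconvergent, convNum, h.ee_zero, h.ee_one]⟩

end IsEuclideanAlgorithm

theorem image_semiconvergents {α : Type*} {f : ℕ × ℕ → α} {F G : ℕ → ℕ → α} {c ee : ℕ → ℕ} {n : ℕ}
    (hF : ∀ j i, j ≤ n → 1 ≤ i → i ≤ c (j + 1) → Even j →
      f (semiconvergent c ee j i) = F (j + 1) i)
    (hG : ∀ j i, j ≤ n → 1 ≤ i → i ≤ c (j + 1) → Odd j →
      f (semiconvergent c ee j i) = G (j + 1) i) :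
    f '' semiconvergents c ee n = {f (0, 1)} ∪
      {z | ∃ j i, Odd j ∧ 1 ≤ j ∧ j ≤ n + 1 ∧ 1 ≤ i ∧ i ≤ c j ∧ z = F j i} ∪
      {z | ∃ j i, Even j ∧ 2 ≤ j ∧ j ≤ n + 1 ∧ 1 ≤ i ∧ i ≤ c j ∧ z = G j i} := by
  ext z
  rw [semiconvergents, Set.image_insert_eq, Set.insert_eq, Set.union_assoc]
  refine or_congr Iff.rfl ⟨?_, ?_⟩
  · rintro ⟨_, ⟨j, i, hj, hi₁, hi, rfl⟩, rfl⟩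
    obtain hj₂ | hj₂ := j.even_or_odd
    · exact .inl ⟨j + 1, i, hj₂.add_one, by omega, by omega, hi₁, hi, hF j i hj hi₁ hi hj₂⟩
    · have := hj₂.pos
      exact .inr ⟨j + 1, i, hj₂.add_one, by omega, by omega, hi₁, hi, hG j i hj hi₁ hi hj₂⟩
  · rintro (⟨_ | j, i, hj₂, hj₁, hj, hi₁, hi, rfl⟩ | ⟨_ | j, i, hj₂, hj₁, hj, hi₁, hi, rfl⟩)
    · omega
    · rw [Nat.odd_add_one, Nat.not_odd_iff_even] at hj₂
      exact ⟨_, ⟨j, i, by omega, hi₁, hi, rfl⟩, hF j i (by omega) hi₁ hi hj₂⟩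
    · omega
    · rw [Nat.even_add_one, Nat.not_even_iff_odd] at hj₂
      exact ⟨_, ⟨j, i, by omega, hi₁, hi, rfl⟩, hG j i (by omega) hi₁ hi hj₂⟩

theorem stmt9_general {k : Type*} [CommRing k] (d b : ℕ) (hbd : b < d) (s : ℕ) (dd cc ee : ℕ → ℕ)
    (hdd0 : dd 0 = d) (hdd1 : dd 1 = b)
    (hrec : ∀ j, 1 ≤ j → j ≤ s + 2 →
      dd (j - 1) = cc j * dd j + dd (j + 1) ∧ dd (j + 1) < dd j)
    (hdds2 : dd (s + 3) = 0)
    (hee0 : ee 0 = 0) (hee1 : ee 1 = 1)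
    (heerec : ∀ j, 1 ≤ j → j ≤ s + 2 → ee (j + 1) = cc j * ee j + ee (j - 1)) :
    let R := MvPolynomial (Fin 2) k
    let x : R := X 0
    let y : R := X 1
    let ψ : MvPolynomial (Fin 3) R →ₐ[R] Polynomial R :=
      aeval ![Polynomial.C (x ^ d) * Polynomial.X, Polynomial.C (y ^ d) * Polynomial.X,
        Polynomial.C (x ^ b * y ^ (d - b)) * Polynomial.X]
    let p : ℕ → ℕ → ℕ := fun k i =>
      (dd (k - 1) - i * dd k + b * (i * ee k + ee (k - 1))) / d
    let q : ℕ → ℕ → ℕ := fun k i =>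
      (dd (k - 1) - i * dd k + (d - b) * (i * ee k + ee (k - 1))) / d
    let F : ℕ → ℕ → MvPolynomial (Fin 3) R := fun k i =>
      C (x ^ (dd (k - 1) - i * dd k)) * X 2 ^ (i * ee k + ee (k - 1)) -
        C (y ^ (dd (k - 1) - i * dd k)) * X 0 ^ p k i *
          X 1 ^ (i * ee k + ee (k - 1) - p k i)
    let G : ℕ → ℕ → MvPolynomial (Fin 3) R := fun k i =>
      C (y ^ (dd (k - 1) - i * dd k)) * X 2 ^ (i * ee k + ee (k - 1)) -
        C (x ^ (dd (k - 1) - i * dd k)) * X 0 ^ (i * ee k + ee (k - 1) - q k i) *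
          X 1 ^ q k i
    let G00 : MvPolynomial (Fin 3) R := C (y ^ b) * X 2 - C (x ^ b) * X 1
    RingHom.ker ψ.toRingHom = Ideal.span
      ({G00} ∪
        {f | ∃ j i, Odd j ∧ 1 ≤ j ∧ j ≤ s + 2 ∧ 1 ≤ i ∧ i ≤ cc j ∧ f = F j i} ∪
        {g | ∃ j i, Even j ∧ 2 ≤ j ∧ j ≤ s + 2 ∧ 1 ≤ i ∧ i ≤ cc j ∧ g = G j i}) := by
  intro R x y ψ p q F G G00
  have hlt : ∀ j ≤ s + 2, dd (j + 1) < dd j := by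
    rintro (_ | j) hj
    exacts [by rwa [zero_add, hdd0, hdd1], (hrec (j + 1) (by omega) hj).2]
  have h : IsEuclideanAlgorithm d b s dd cc ee := ⟨hdd0, hdd1,
    fun j hj => (hrec (j + 1) (by omega) (by omega)).1, hlt, hdds2, hee0, hee1,
    fun j hj => heerec (j + 1) (by omega) (by omega)⟩
  have hψ : ψ = trinomialReesMap k b (d - b) := by
    rw [trinomialReesMap_eq_aeval, Nat.add_sub_cancel' h.le]
  have hG00 : toricBinomial k b (d - b) 0 1 = G00 := by simp [toricBinomial, G00, x, y, R]
  rw [hψ, ← hG00]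
  refine (ker_trinomialReesMap h.isDominating_semiconvergents
    (h.one_zero_mem_semiconvergents _) (Set.mem_insert _ _)).trans (congrArg _ ?_)
  exact image_semiconvergents
    (fun j i hj hi₁ hi hj₂ => h.toricBinomial_semiconvergent_of_even k hj hi₁ hi hj₂)
    (fun j i hj hi₁ hi hj₂ => h.toricBinomial_semiconvergent_of_odd k hj hi₁ hi hj₂)

/-- Let `I = (x^d, y^d, x^b y^{d-b}) ⊆ k[x,y]` with `gcd(d,b) = 1`.
The Rees ideal `𝓘` of `I` is generated by the set
`Σ = {G_{0,0}} ∪ {F_{k,i} : k odd, 1 ≤ k ≤ s+2, 1 ≤ i ≤ c_k}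
             ∪ {G_{k,i} : k even, 2 ≤ k ≤ s+2, 1 ≤ i ≤ c_k}`. -/
theorem stmt9 {k : Type*} [Field k] (d b : ℕ) (hd : 2 ≤ d) (hb : 0 < b) (hbd : b < d)
    (hgcd : Nat.gcd d b = 1)
    (s : ℕ) (dd cc ee : ℕ → ℕ)
    (hdd0 : dd 0 = d) (hdd1 : dd 1 = b)
    (hrec : ∀ j, 1 ≤ j → j ≤ s + 2 →
      dd (j - 1) = cc j * dd j + dd (j + 1) ∧ dd (j + 1) < dd j)
    (hdds1 : dd (s + 2) = 1) (hdds2 : dd (s + 3) = 0)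
    (hee0 : ee 0 = 0) (hee1 : ee 1 = 1)
    (heerec : ∀ j, 1 ≤ j → j ≤ s + 2 → ee (j + 1) = cc j * ee j + ee (j - 1)) :
    let R := MvPolynomial (Fin 2) k
    let x : R := X 0
    let y : R := X 1
    -- the Rees map  t ↦ x^d T, u ↦ y^d T, v ↦ x^b y^{d-b} T
    let ψ : MvPolynomial (Fin 3) R →ₐ[R] Polynomial R :=
      aeval ![Polynomial.C (x ^ d) * Polynomial.X, Polynomial.C (y ^ d) * Polynomial.X,
        Polynomial.C (x ^ b * y ^ (d - b)) * Polynomial.X]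
    let p : ℕ → ℕ → ℕ := fun k i =>
      (dd (k - 1) - i * dd k + b * (i * ee k + ee (k - 1))) / d
    let q : ℕ → ℕ → ℕ := fun k i =>
      (dd (k - 1) - i * dd k + (d - b) * (i * ee k + ee (k - 1))) / d
    let F : ℕ → ℕ → MvPolynomial (Fin 3) R := fun k i =>
      C (x ^ (dd (k - 1) - i * dd k)) * X 2 ^ (i * ee k + ee (k - 1)) -
        C (y ^ (dd (k - 1) - i * dd k)) * X 0 ^ p k i *
          X 1 ^ (i * ee k + ee (k - 1) - p k i)
    let G : ℕ → ℕ → MvPolynomial (Fin 3) R := fun k i =>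
      C (y ^ (dd (k - 1) - i * dd k)) * X 2 ^ (i * ee k + ee (k - 1)) -
        C (x ^ (dd (k - 1) - i * dd k)) * X 0 ^ (i * ee k + ee (k - 1) - q k i) *
          X 1 ^ q k i
    -- `G_{0,0} = y^b v - x^b u`
    let G00 : MvPolynomial (Fin 3) R := C (y ^ b) * X 2 - C (x ^ b) * X 1
    RingHom.ker ψ.toRingHom = Ideal.span
      ({G00} ∪
        {f | ∃ j i, Odd j ∧ 1 ≤ j ∧ j ≤ s + 2 ∧ 1 ≤ i ∧ i ≤ cc j ∧ f = F j i} ∪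
        {g | ∃ j i, Even j ∧ 2 ≤ j ∧ j ≤ s + 2 ∧ 1 ≤ i ∧ i ≤ cc j ∧ g = G j i}) := by
  exact stmt9_general d b hbd s dd cc ee hdd0 hdd1 hrec hdds2 hee0 hee1 heerec
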